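/- arXiv:1909.09723 — 2 statements merged into one kernel-verified Lean document; each statement's English description precedes it below -/
import Mathlib

section
/- Let S be a semitopological semigroup. Then S has property (D) if and only if S has property (E). Here property (D) means: every Q-nonexpansive dynamical system (S,(K,τ)), where K is a compact convex subset of a Hausdorff locally convex space (X,τ) whose topology is determined by a family Q of seminorms, has a point x ∈ K with sx = x for all s ∈ S; and property (E) means: every Q-nonexpansive dynamical system (S,(K,weak)), where K is a weakly compact convex subset of such a space and the translations λ_s: K → K are equicontinuous in the weak topology, has a point x ∈ K with sx = x for all s ∈ S. -/
open Set MeasureTheory BoundedContinuousFunction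

noncomputable section

universe u v

/-- The weak topology on a topological module `X` over `𝕜`: the coarsest topology making all
continuous linear functionals continuous. -/
def weakTop (𝕜 : Type*) (X : Type*) [NontriviallyNormedField 𝕜] [AddCommGroup X]
    [Module 𝕜 X] [TopologicalSpace X] : TopologicalSpace X :=
  ⨅ f : X →L[𝕜] 𝕜, TopologicalSpace.induced (⇑f) inferInstance

/-- A semitopological semigroup: multiplication is separately continuous. -/
def IsSemitopologicalSemigroup (S : Type*) [Semigroup S] [TopologicalSpace S] : Prop :=
  (∀ t : S, Continuous fun s => t * s) ∧ (∀ t : S, Continuous fun s => s * t)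


/-- Property (E): every `Q`-nonexpansive dynamical system `(S,(K,weak))` on a nonempty weakly
compact convex subset of a Hausdorff locally convex space, whose translations are equicontinuous
in the weak topology, has a common fixed point. -/
def PropertyE (S : Type u) [Semigroup S] [TopologicalSpace S] : Prop :=
  ∀ (X : Type v) [AddCommGroup X] [Module ℝ X] [TopologicalSpace X] [T2Space X]
    (ι : Type v) [Nonempty ι] (Q : SeminormFamily ℝ X ι), WithSeminorms Q →
    ∀ (K : Set X) (π : S → X → X),
      K.Nonempty → Convex ℝ K → @IsCompact X (weakTop ℝ X) K →
      (∀ s : S, MapsTo (π s) K K) →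
      (∀ s t : S, ∀ x ∈ K, π (s * t) x = π s (π t x)) →
      -- the action is separately continuous when `K` carries the weak topology
      (∀ x ∈ K, @Continuous S X _ (weakTop ℝ X) fun s => π s x) →
      (∀ s : S, @ContinuousOn X X (weakTop ℝ X) (weakTop ℝ X) (π s) K) →
      -- the action is `Q`-nonexpansive
      (∀ (i : ι) (s : S), ∀ x ∈ K, ∀ y ∈ K, Q i (π s x - π s y) ≤ Q i (x - y)) →
      -- the translations `λ_s` are equicontinuous in the weak topology
      (∀ x ∈ K, ∀ V ∈ @nhds X (weakTop ℝ X) 0,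
        ∃ U ∈ @nhds X (weakTop ℝ X) x, ∀ s : S, ∀ y ∈ U ∩ K, π s y - π s x ∈ V) →
      ∃ x ∈ K, ∀ s : S, π s x = x

/-- Property (D): every `Q`-nonexpansive dynamical system `(S,(K,τ))` on a nonempty compact
convex subset of a Hausdorff locally convex space (with its original topology `τ`) has a common
fixed point. -/
def PropertyD (S : Type u) [Semigroup S] [TopologicalSpace S] : Prop :=
  ∀ (X : Type v) [AddCommGroup X] [Module ℝ X] [TopologicalSpace X] [T2Space X]
    (ι : Type v) [Nonempty ι] (Q : SeminormFamily ℝ X ι), WithSeminorms Q →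
    ∀ (K : Set X) (π : S → X → X),
      K.Nonempty → Convex ℝ K → IsCompact K →
      (∀ s : S, MapsTo (π s) K K) →
      (∀ s t : S, ∀ x ∈ K, π (s * t) x = π s (π t x)) →
      -- the action is separately continuous when `K` carries the topology `τ`
      (∀ x ∈ K, Continuous fun s => π s x) →
      (∀ s : S, ContinuousOn (π s) K) →
      -- the action is `Q`-nonexpansive
      (∀ (i : ι) (s : S), ∀ x ∈ K, ∀ y ∈ K, Q i (π s x - π s y) ≤ Q i (x - y)) →
      ∃ x ∈ K, ∀ s : S, π s x = x

/-!
(E) ⇒ (D): on a compact set the weak topology agrees with the original one, for which a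
nonexpansive family of maps is equicontinuous.

(D) ⇒ (E): let `A` be a minimal invariant nonempty weakly compact convex subset of `K`. The means
on `C(A)` form a compact convex set for the seminorms `Λ ↦ sup_s |Λ (g ∘ s)|`, on which `S` acts
nonexpansively, so (D) provides an invariant mean. Its support `F` satisfies `sF = F` for all `s`;
hence on `F` the translations are equicontinuous and surjective and behave like elements of a
compact group. A Baire category argument then shows that the weak orbit closure `B` of a point of
`F` is totally bounded for every seminorm of `Q`. Since `sB = B`, DeMarr's argument applies: if `B`
had positive diameter, an average of a finite net of `B` would have a smaller Chebyshev radius, and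
cutting `A` down accordingly would contradict minimality. So `B` is a single point, which is fixed.
-/

open Filter Topology Uniformity MulAction Function

lemma exists_lt_mem_uniformity {Y : Type*} [UniformSpace Y] [CompactSpace Y] (u : ℕ → Y)
    {V : SetRel Y Y} (hV : V ∈ 𝓤 Y) : ∃ n k, n < k ∧ (u n, u k) ∈ V := by
  obtain ⟨W, hW, hWsymm, hWV⟩ := comp_symm_mem_uniformity_sets hV
  obtain ⟨y, hy⟩ := exists_clusterPt_of_compactSpace (map u atTop)
  have hfreq : ∃ᶠ n in atTop, (y, u n) ∈ W := hy.frequently (mem_nhds_left y hW)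
  obtain ⟨n, hn⟩ := hfreq.exists
  obtain ⟨k, hk, hnk⟩ := (hfreq.and_eventually (eventually_gt_atTop n)).exists
  exact ⟨n, k, hnk, hWV ⟨y, hWsymm.symm _ _ hn, hk⟩⟩

/-- An action of a monoid on a uniform space by a uniformly equicontinuous family of surjective
maps. On a compact space the translations then behave like elements of a compact group, although
they are not assumed to be invertible. -/
structure IsEquicontinuousSurjective (M Y : Type*) [UniformSpace Y] [Monoid M] [MulAction M Y] :
    Prop where
  uniformEquicontinuous : UniformEquicontinuous fun (m : M) (y : Y) => m • y
  surjective (m : M) : Surjective fun y : Y => m • y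

namespace IsEquicontinuousSurjective

variable {M Y : Type*} [UniformSpace Y] [Monoid M] [MulAction M Y]

lemma continuousConstSMul (h : IsEquicontinuousSurjective M Y) : ContinuousConstSMul M Y :=
  ⟨h.uniformEquicontinuous.equicontinuous.continuous⟩

lemma submonoid (h : IsEquicontinuousSurjective M Y) (N : Submonoid M) :
    IsEquicontinuousSurjective N Y where
  uniformEquicontinuous := h.uniformEquicontinuous.comp ((↑) : N → M)
  surjective n := h.surjective n

lemma prod (h : IsEquicontinuousSurjective M Y) : IsEquicontinuousSurjective M (Y × Y) where
  uniformEquicontinuous U hU := by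
    rw [uniformity_prod_eq_comap_prod, mem_comap] at hU
    obtain ⟨T, hT, hTU⟩ := hU
    obtain ⟨V, hV, W, hW, hVW⟩ := mem_prod_iff.1 hT
    filter_upwards [entourageProd_mem_uniformity (h.uniformEquicontinuous V hV)
      (h.uniformEquicontinuous W hW)] with q hq m
    exact hTU (hVW ⟨hq.1 m, hq.2 m⟩)
  surjective m := (h.surjective m).prodMap (h.surjective m)

variable [CompactSpace Y]

/- Along a backward orbit `x = m • y₁`, `y₁ = m • y₂`, … two terms `yₙ`, `yₖ` are close, and
applying `m ^ k` moves them to `m ^ (k - n) • x` and `x`. -/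
lemma exists_pow_smul_mem (h : IsEquicontinuousSurjective M Y) (m : M) (x : Y)
    {V : SetRel Y Y} (hV : V ∈ 𝓤 Y) : ∃ n : ℕ, (m ^ (n + 1) • x, x) ∈ V := by
  choose r hr using h.surjective m
  replace hr (y : Y) : m • r y = y := hr y
  have hpow (n : ℕ) : m ^ n • r^[n] x = x := by
    induction n with
    | zero => simp
    | succ n ih => rw [pow_succ, mul_smul, iterate_succ_apply', hr, ih]
  obtain ⟨n, k, hnk, hclose⟩ :=
    exists_lt_mem_uniformity (fun n => r^[n] x) (h.uniformEquicontinuous V hV)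
  obtain ⟨j, rfl⟩ := Nat.exists_eq_add_of_lt hnk
  refine ⟨j, ?_⟩
  have hmem : (m ^ (n + j + 1) • r^[n] x, m ^ (n + j + 1) • r^[n + j + 1] x) ∈ V := hclose _
  rwa [hpow, show n + j + 1 = j + 1 + n by lia, pow_add, mul_smul, hpow] at hmem

lemma mem_closure_orbit_smul (h : IsEquicontinuousSurjective M Y) (m : M) (x : Y) :
    x ∈ closure (orbit M (m • x)) := by
  refine UniformSpace.mem_closure_iff_ball.2 fun hV => ?_
  obtain ⟨n, hn⟩ := h.exists_pow_smul_mem m x (symm_le_uniformity hV)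
  exact ⟨m ^ (n + 1) • x, hn, m ^ n, by rw [pow_succ, mul_smul]⟩

lemma closure_orbit_subset (h : IsEquicontinuousSurjective M Y) (m : M) (x : Y) :
    closure (orbit M x) ⊆ closure (orbit M (m • x)) := by
  have := h.continuousConstSMul
  refine closure_minimal ?_ isClosed_closure
  rintro _ ⟨l, rfl⟩
  exact smul_closure_orbit_subset l _ (smul_mem_smul_set (h.mem_closure_orbit_smul m x))

lemma surjOn_of_mapsTo [T2Space Y] (h : IsEquicontinuousSurjective M Y) {Z : Set Y}
    (hZ : IsClosed Z) {m : M} (hm : MapsTo (fun y => m • y) Z Z) :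
    SurjOn (fun y => m • y) Z Z := by
  have := h.continuousConstSMul
  intro z hz
  have hclosed : IsClosed ((fun y => m • y) '' Z) :=
    (hZ.isCompact.image (continuous_const_smul m)).isClosed
  refine hclosed.closure_subset (UniformSpace.mem_closure_iff_ball.2 fun hV => ?_)
  obtain ⟨n, hn⟩ := h.exists_pow_smul_mem m z (symm_le_uniformity hV)
  refine ⟨m ^ (n + 1) • z, hn, m ^ n • z, ?_, by simp only [pow_succ', mul_smul]⟩
  rw [← smul_iterate_apply]
  exact hm.iterate n hz

lemma surjOn_closure_orbit [T2Space Y] (h : IsEquicontinuousSurjective M Y) (m : M) (x : Y) :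
    SurjOn (fun y => m • y) (closure (orbit M x)) (closure (orbit M x)) :=
  have := h.continuousConstSMul
  h.surjOn_of_mapsTo isClosed_closure fun _ hy =>
    smul_closure_orbit_subset m x (smul_mem_smul_set hy)

lemma exists_uniformity_forall_smul_mem (h : IsEquicontinuousSurjective M Y) {V : SetRel Y Y}
    (hV : V ∈ 𝓤 Y) : ∃ W ∈ 𝓤 Y, ∀ (m : M) (y z : Y), (m • y, m • z) ∈ W → (y, z) ∈ V := by
  obtain ⟨U, hU, hUclosed, hUV⟩ := mem_uniformity_isClosed hV
  refine ⟨_, h.uniformEquicontinuous U hU, fun m y z hyz => hUV ?_⟩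
  refine hUclosed.closure_subset (UniformSpace.mem_closure_iff_ball.2 fun hT => ?_)
  obtain ⟨n, hn⟩ := h.prod.exists_pow_smul_mem m (y, z) (symm_le_uniformity hT)
  exact ⟨m ^ (n + 1) • (y, z), hn, by
    simpa only [pow_succ, mul_smul, Prod.smul_mk] using hyz (m ^ n)⟩

end IsEquicontinuousSurjective

section WeaklyContinuous

open TopologicalSpace

variable {X : Type*} [AddCommGroup X] [Module ℝ X] [TopologicalSpace X]
  [IsTopologicalAddGroup X] [ContinuousSMul ℝ X] [LocallyConvexSpace ℝ X]

lemma isClosed_preimage_of_convex {Y : Type*} [TopologicalSpace Y] {j : Y → X}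
    (hj : Continuous fun y => toWeakSpace ℝ X (j y)) {C : Set X} (hC : Convex ℝ C)
    (hclosed : IsClosed C) : IsClosed (j ⁻¹' C) := by
  have hweak : IsClosed (toWeakSpace ℝ X '' C) := by
    rw [← hclosed.closure_eq, hC.toWeakSpace_closure ℝ]
    exact isClosed_closure
  rw [← (toWeakSpace ℝ X).injective.preimage_image C]
  exact hweak.preimage hj

lemma isClosed_setOf_seminorm_sub_le {Y : Type*} [TopologicalSpace Y] {j : Y → X}
    (hj : Continuous fun y => toWeakSpace ℝ X (j y)) {p : Seminorm ℝ X} (hp : Continuous p)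
    (d : X) (r : ℝ) : IsClosed {y | p (j y - d) ≤ r} :=
  isClosed_preimage_of_convex hj (p.convex_closedBall d r)
    (isClosed_le (hp.comp (continuous_id.sub continuous_const)) continuous_const)

lemma isSeparable_image_closure {Y : Type*} [TopologicalSpace Y] {j : Y → X}
    (hj : Continuous fun y => toWeakSpace ℝ X (j y)) {C : Set Y} (hC : C.Countable) :
    IsSeparable (j '' closure C) := by
  have hspan : IsSeparable (Submodule.span ℝ (j '' C) : Set X) := (hC.image j).isSeparable.span
  refine hspan.closure.mono (image_subset_iff.2 (closure_minimal ?_ ?_))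
  · exact image_subset_iff.1 (Submodule.subset_span.trans subset_closure)
  · exact isClosed_preimage_of_convex hj (Submodule.convex _).closure isClosed_closure

lemma exists_isOpen_forall_seminorm_sub_le {Z : Type*} [TopologicalSpace Z] [BaireSpace Z]
    [Nonempty Z] {j : Z → X} (hj : Continuous fun z => toWeakSpace ℝ X (j z))
    (hsep : IsSeparable (range j)) {p : Seminorm ℝ X} (hp : Continuous p) {ε : ℝ} (hε : 0 < ε) :
    ∃ U : Set Z, IsOpen U ∧ U.Nonempty ∧ ∀ u ∈ U, ∀ v ∈ U, p (j u - j v) ≤ ε := by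
  obtain ⟨D, hDcount, hD⟩ := hsep
  have : Countable D := hDcount.to_subtype
  have hcover : ⋃ d : D, {z | p (j z - d) ≤ ε / 2} = univ := by
    refine eq_univ_of_forall fun z => mem_iUnion.2 ?_
    have hball : {d | p (j z - d) < ε / 2} ∈ 𝓝 (j z) :=
      (isOpen_lt (hp.comp (continuous_const.sub continuous_id)) continuous_const).mem_nhds
        (by simpa using hε)
    obtain ⟨d, hd, hdD⟩ := mem_closure_iff_nhds.1 (hD (mem_range_self z)) _ hball
    exact ⟨⟨d, hdD⟩, (mem_ofPred.1 hd).le⟩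
  obtain ⟨d, hd⟩ := nonempty_interior_of_iUnion_of_closed
    (fun d : D => isClosed_setOf_seminorm_sub_le hj hp d (ε / 2)) hcover
  refine ⟨_, isOpen_interior, hd, fun u hu v hv => ?_⟩
  have hu' : p (j u - d) ≤ ε / 2 := (interior_subset hu :)
  have hv' : p (j v - d) ≤ ε / 2 := (interior_subset hv :)
  calc p (j u - j v) = p ((j u - d) - (j v - d)) := by rw [sub_sub_sub_cancel_right]
    _ ≤ p (j u - d) + p (j v - d) := map_sub_le_add p _ _
    _ ≤ ε := by linarith

namespace IsEquicontinuousSurjective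

variable {M Y : Type*} [UniformSpace Y] [CompactSpace Y] [T2Space Y] [Monoid M] [MulAction M Y]
  {j : Y → X} {p : Seminorm ℝ X} {ε : ℝ}

/- By the Baire category theorem `j` oscillates little near some orbit point; equicontinuity of the
inverse translations transports this estimate, with the same radius, to the whole orbit closure. -/
lemma exists_uniformity_seminorm_sub_le [Countable M] (h : IsEquicontinuousSurjective M Y)
    (hj : Continuous fun y => toWeakSpace ℝ X (j y)) (hp : Continuous p)
    (hnonexp : ∀ (m : M) (y z : Y), p (j (m • y) - j (m • z)) ≤ p (j y - j z)) (x : Y)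
    (hε : 0 < ε) :
    ∃ V ∈ 𝓤 Y, ∀ y ∈ closure (orbit M x), ∀ z ∈ closure (orbit M x),
      (y, z) ∈ V → p (j y - j z) ≤ ε := by
  set Z := closure (orbit M x)
  have : CompactSpace Z := isCompact_iff_compactSpace.1 isClosed_closure.isCompact
  have : Nonempty Z := ⟨x, subset_closure (mem_orbit_self x)⟩
  obtain ⟨U', hU'open, ⟨u, hu⟩, hU'⟩ := exists_isOpen_forall_seminorm_sub_le (Z := Z)
    (j := fun z => j z) (hj.comp continuous_subtype_val)
    (image_eq_range j Z ▸ isSeparable_image_closure hj (countable_range _)) hp hε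
  obtain ⟨U, hU, rfl⟩ := isOpen_induced_iff.1 hU'open
  obtain ⟨_, hkU, k, rfl⟩ := mem_closure_iff.1 u.2 U hU hu
  obtain ⟨V, hV, hVU⟩ := UniformSpace.mem_nhds_iff.1 (hU.mem_nhds hkU)
  obtain ⟨W, hW, hWV⟩ := h.exists_uniformity_forall_smul_mem hV
  obtain ⟨T, hT, hTW⟩ := comp_mem_uniformity_sets hW
  refine ⟨T, hT, fun y hy z hz hyz => ?_⟩
  obtain ⟨_, hl, l, rfl⟩ := UniformSpace.mem_closure_iff_ball.1
    (h.closure_orbit_subset k x hy) (symm_le_uniformity hT)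
  obtain ⟨a, ha, rfl⟩ := h.surjOn_closure_orbit l x hy
  obtain ⟨b, hb, rfl⟩ := h.surjOn_closure_orbit l x hz
  have haU : a ∈ U := hVU (hWV l _ _ (hTW ⟨_, hl, refl_mem_uniformity hT⟩))
  have hbU : b ∈ U := hVU (hWV l _ _ (hTW ⟨_, hl, hyz⟩))
  exact (hnonexp l a b).trans (hU' ⟨a, ha⟩ haU ⟨b, hb⟩ hbU)

lemma exists_lt_seminorm_sub_le (h : IsEquicontinuousSurjective M Y)
    (hj : Continuous fun y => toWeakSpace ℝ X (j y)) (hp : Continuous p)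
    (hnonexp : ∀ (m : M) (y z : Y), p (j (m • y) - j (m • z)) ≤ p (j y - j z)) (x : Y)
    (s : ℕ → M) (hε : 0 < ε) : ∃ n k, n < k ∧ p (j (s n • x) - j (s k • x)) ≤ ε := by
  let N := Submonoid.closure (range s)
  have : Countable N := by
    rw [show N = _ from Submonoid.closure_eq_mrange _]
    have := (countable_range s).to_subtype
    have : Countable (FreeMonoid (range s)) := inferInstanceAs (Countable (List (range s)))
    exact (MonoidHom.mrangeRestrict_surjective _).countable
  have hmem (n : ℕ) : s n • x ∈ closure (orbit N x) :=
    subset_closure ⟨⟨s n, Submonoid.subset_closure (mem_range_self n)⟩, rfl⟩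
  obtain ⟨V, hV, hVε⟩ := (h.submonoid N).exists_uniformity_seminorm_sub_le hj hp
    (fun m => hnonexp m) x hε
  obtain ⟨n, k, hnk, hclose⟩ := exists_lt_mem_uniformity (fun n => s n • x) hV
  exact ⟨n, k, hnk, hVε _ (hmem n) _ (hmem k) hclose⟩

lemma exists_finset_forall_mem_closure_orbit (h : IsEquicontinuousSurjective M Y)
    (hj : Continuous fun y => toWeakSpace ℝ X (j y)) (hp : Continuous p)
    (hnonexp : ∀ (m : M) (y z : Y), p (j (m • y) - j (m • z)) ≤ p (j y - j z)) (x : Y)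
    (hε : 0 < ε) :
    ∃ A : Finset M, ∀ z ∈ closure (orbit M x), ∃ m ∈ A, p (j z - j (m • x)) ≤ ε := by
  have hclosed (A : Finset M) : IsClosed (⋃ m ∈ A, {z | p (j z - j (m • x)) ≤ ε}) :=
    isClosed_biUnion_finset fun m _ => isClosed_setOf_seminorm_sub_le hj hp _ _
  obtain ⟨A, hA⟩ : ∃ A : Finset M, ∀ l : M, ∃ m ∈ A, p (j (l • x) - j (m • x)) ≤ ε := by
    by_contra! hsep
    obtain ⟨s, -, hs⟩ := exists_seq_of_forall_finset_exists (fun _ : M => True)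
      (fun m l => ε < p (j (l • x) - j (m • x)))
      (fun A _ => (hsep A).imp fun _ hl => ⟨trivial, hl⟩)
    obtain ⟨n, k, hnk, hle⟩ := h.exists_lt_seminorm_sub_le hj hp hnonexp x s hε
    exact hle.not_gt (map_sub_rev p _ _ ▸ hs n k hnk)
  refine ⟨A, fun z hz => ?_⟩
  have horbit : orbit M x ⊆ ⋃ m ∈ A, {z | p (j z - j (m • x)) ≤ ε} := by
    rintro _ ⟨l, rfl⟩
    simpa using hA l
  simpa using closure_minimal horbit (hclosed A) hz

end IsEquicontinuousSurjective

end WeaklyContinuous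

lemma convexOn_seminorm_sub {W : Type*} [AddCommGroup W] [Module ℝ W] (p : Seminorm ℝ W) (b : W) :
    ConvexOn ℝ univ fun u => p (u - b) := by
  simpa only [sub_eq_add_neg, preimage_univ, comp_def] using p.convexOn.translate_left (-b)

/- The centre is the average of `A`: at every `b` one of its terms contributes at most `δ` instead
of `R`. -/
lemma exists_lt_forall_seminorm_sub_le {W : Type*} [AddCommGroup W] [Module ℝ W]
    (p : Seminorm ℝ W) {K B : Set W} {A : Finset W} {R δ : ℝ} (hK : Convex ℝ K) (hA : A.Nonempty)
    (hAK : ↑A ⊆ K) (hdiam : ∀ a ∈ A, ∀ b ∈ B, p (a - b) ≤ R) (hδ : δ < R)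
    (hnet : ∀ b ∈ B, ∃ a ∈ A, p (a - b) ≤ δ) :
    ∃ r < R, ∃ u ∈ K, ∀ b ∈ B, p (u - b) ≤ r := by
  have hcard : (0 : ℝ) < A.card := by exact_mod_cast hA.card_pos
  have hweight : ∑ _a ∈ A, (A.card : ℝ)⁻¹ = 1 := by
    rw [Finset.sum_const, nsmul_eq_mul, mul_inv_cancel₀ hcard.ne']
  have hnonneg : ∀ a ∈ A, 0 ≤ (A.card : ℝ)⁻¹ := fun _ _ => by positivity
  refine ⟨R - (A.card : ℝ)⁻¹ * (R - δ), ?_, ∑ a ∈ A, (A.card : ℝ)⁻¹ • a,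
    hK.sum_mem hnonneg hweight fun a ha => hAK ha, fun b hb => ?_⟩
  · exact sub_lt_self R (mul_pos (inv_pos.2 hcard) (sub_pos.2 hδ))
  obtain ⟨a₀, ha₀, hle⟩ := hnet b hb
  have hgain : R - δ ≤ ∑ a ∈ A, (R - p (a - b)) :=
    calc R - δ ≤ R - p (a₀ - b) := by linarith
      _ ≤ ∑ a ∈ A, (R - p (a - b)) :=
        Finset.single_le_sum (f := fun a => R - p (a - b))
          (fun a ha => sub_nonneg.2 (hdiam a ha b hb)) ha₀
  calc p (∑ a ∈ A, (A.card : ℝ)⁻¹ • a - b)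
      ≤ ∑ a ∈ A, (A.card : ℝ)⁻¹ • p (a - b) :=
        (convexOn_seminorm_sub p b).map_sum_le hnonneg hweight fun _ _ => mem_univ _
    _ = R - (A.card : ℝ)⁻¹ * ∑ a ∈ A, (R - p (a - b)) := by
        rw [Finset.sum_sub_distrib, Finset.sum_const, nsmul_eq_mul, mul_sub,
          inv_mul_cancel_left₀ hcard.ne', sub_sub_cancel, Finset.mul_sum]
        simp only [smul_eq_mul]
    _ ≤ R - (A.card : ℝ)⁻¹ * (R - δ) := by gcongr

/-- `A` is a possible domain for the action `π`: a nonempty compact convex set which is mapped into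
itself by all translations. Fixed points are sought in the minimal sets of this kind. -/
structure IsInvariantConvexCompact {S W : Type*} [AddCommGroup W] [Module ℝ W] [TopologicalSpace W]
    (π : S → W → W) (A : Set W) : Prop where
  nonempty : A.Nonempty
  convex : Convex ℝ A
  isCompact : IsCompact A
  mapsTo (s : S) : MapsTo (π s) A A

namespace IsInvariantConvexCompact

variable {S W : Type*} [AddCommGroup W] [Module ℝ W] [TopologicalSpace W] {π : S → W → W}

lemma sInter [T2Space W] {c : Set (Set W)} (hc : ∀ A ∈ c, IsInvariantConvexCompact π A)
    (hchain : IsChain (· ⊆ ·) c) (hne : c.Nonempty) : IsInvariantConvexCompact π (⋂₀ c) where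
  nonempty := by
    have := hne.to_subtype
    exact IsCompact.nonempty_sInter_of_directed_nonempty_isCompact_isClosed
      (fun A hA B hB => (hchain.total hA hB).elim (fun h => ⟨A, hA, Subset.rfl, h⟩)
        fun h => ⟨B, hB, h, Subset.rfl⟩)
      (fun A hA => (hc A hA).nonempty) (fun A hA => (hc A hA).isCompact)
      (fun A hA => (hc A hA).isCompact.isClosed)
  convex := convex_sInter fun A hA => (hc A hA).convex
  isCompact := by
    obtain ⟨A, hA⟩ := hne
    exact (hc A hA).isCompact.of_isClosed_subset
      (isClosed_sInter fun B hB => (hc B hB).isCompact.isClosed) (sInter_subset_of_mem hA)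
  mapsTo s _ hx A hA := (hc A hA).mapsTo s (hx A hA)

lemma exists_minimal [T2Space W] {K : Set W} (hK : IsInvariantConvexCompact π K) :
    ∃ A ⊆ K, Minimal (IsInvariantConvexCompact π) A :=
  zorn_superset_nonempty {A | IsInvariantConvexCompact π A}
    (fun _ hc hchain hne => ⟨_, sInter hc hchain hne, fun _ => sInter_subset_of_mem⟩) K hK

variable {A B : Set W} {p : Seminorm ℝ W}

lemma forall_seminorm_sub_le_of_exists (hA : Minimal (IsInvariantConvexCompact π) A)
    (hclosed : ∀ (b : W) (r : ℝ), IsClosed {u | p (u - b) ≤ r})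
    (hnonexp : ∀ s, ∀ x ∈ A, ∀ y ∈ A, p (π s x - π s y) ≤ p (x - y))
    (hBA : B ⊆ A) (hB : ∀ s, SurjOn (π s) B B) {r : ℝ} (hr : ∃ u ∈ A, ∀ b ∈ B, p (u - b) ≤ r) :
    ∀ u ∈ A, ∀ b ∈ B, p (u - b) ≤ r := by
  suffices hC : IsInvariantConvexCompact π (A ∩ ⋂ b ∈ B, {u | p (u - b) ≤ r}) by
    intro u hu b hb
    exact mem_iInter₂.1 (hA.le_of_le hC inter_subset_left hu).2 b hb
  obtain ⟨-, hAconvex, hAcompact, hAmaps⟩ := hA.prop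
  refine ⟨?_, ?_, ?_, fun s u hu => ⟨hAmaps s hu.1, mem_iInter₂.2 fun b hb => ?_⟩⟩
  · exact hr.imp fun u hu => ⟨hu.1, mem_iInter₂.2 hu.2⟩
  · refine hAconvex.inter (convex_iInter₂ fun b _ => ?_)
    simpa using (convexOn_seminorm_sub p b).convex_le r
  · exact hAcompact.inter_right (isClosed_biInter fun b _ => hclosed b r)
  · obtain ⟨c, hc, rfl⟩ := hB s hb
    exact (hnonexp s u hu.1 c (hBA hc)).trans (mem_iInter₂.1 hu.2 c hc)

/- All Chebyshev radii about points of `A` coincide by minimality, and a positive common value would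
be lowered by `exists_lt_forall_seminorm_sub_le`. -/
lemma seminorm_sub_eq_zero (hA : Minimal (IsInvariantConvexCompact π) A)
    (hclosed : ∀ (b : W) (r : ℝ), IsClosed {u | p (u - b) ≤ r})
    (hnonexp : ∀ s, ∀ x ∈ A, ∀ y ∈ A, p (π s x - π s y) ≤ p (x - y))
    (hBA : B ⊆ A) (hB : ∀ s, SurjOn (π s) B B)
    (hnet : ∀ ε > 0, ∃ N : Finset W, ↑N ⊆ B ∧ ∀ b ∈ B, ∃ a ∈ N, p (a - b) ≤ ε)
    {a b : W} (ha : a ∈ B) (hb : b ∈ B) : p (a - b) = 0 := by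
  let T : Set ℝ := {r | ∃ u ∈ A, ∀ b ∈ B, p (u - b) ≤ r}
  have hT : ∀ r ∈ T, ∀ u ∈ A, ∀ b ∈ B, p (u - b) ≤ r := fun r hr =>
    forall_seminorm_sub_le_of_exists hA hclosed hnonexp hBA hB hr
  have hTne : T.Nonempty := by
    obtain ⟨N, -, hN⟩ := hnet 1 one_pos
    obtain ⟨c, hc⟩ := (N.finite_toSet.image fun n => p (a - n)).bddAbove
    refine ⟨c + 1, a, hBA ha, fun b hb => ?_⟩
    obtain ⟨n, hnN, hn⟩ := hN b hb
    calc p (a - b) ≤ p (a - n) + p (n - b) := le_map_sub_add_map_sub p a n b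
      _ ≤ c + 1 := add_le_add (hc (mem_image_of_mem _ hnN)) hn
  have hTbdd : BddBelow T := ⟨0, fun r hr => (apply_nonneg p _).trans (hT r hr a (hBA ha) a ha)⟩
  have hle (u) (hu : u ∈ A) (b) (hb : b ∈ B) : p (u - b) ≤ sInf T :=
    le_csInf hTne fun r hr => hT r hr u hu b hb
  refine le_antisymm ((hle a (hBA ha) b hb).trans (not_lt.1 fun hpos => ?_)) (apply_nonneg p _)
  obtain ⟨N, hNB, hN⟩ := hnet (sInf T / 2) (half_pos hpos)
  obtain ⟨r, hr, hrT⟩ := exists_lt_forall_seminorm_sub_le p hA.prop.convex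
    ((hN a ha).imp fun _ h => h.1) (hNB.trans hBA)
    (fun n hn b hb => hle n (hBA (hNB hn)) b hb) (half_lt_self hpos) hN
  exact hr.not_ge (csInf_le hTbdd hrT)

end IsInvariantConvexCompact

/-- A mean on `C(K, ℝ)`: a positive normalized functional, that is, for compact Hausdorff `K`, a
Radon probability measure on `K` seen as a functional. -/
structure IsMean {K : Type*} [TopologicalSpace K] (Λ : StrongDual ℝ C(K, ℝ)) : Prop where
  nonneg {g : C(K, ℝ)} (hg : 0 ≤ g) : 0 ≤ Λ g
  map_one : Λ 1 = 1

namespace IsMean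

variable {K : Type*} [TopologicalSpace K] {Λ : StrongDual ℝ C(K, ℝ)}

lemma evalCLM (x : K) : IsMean (ContinuousMap.evalCLM ℝ x) where
  nonneg hg := hg x
  map_one := rfl

lemma mono (hΛ : IsMean Λ) {g h : C(K, ℝ)} (hgh : g ≤ h) : Λ g ≤ Λ h := by
  simpa using hΛ.nonneg (sub_nonneg.2 hgh)

lemma abs_apply_le (hΛ : IsMean Λ) (g : C(K, ℝ)) : |Λ g| ≤ Λ |g| :=
  abs_le'.2 ⟨hΛ.mono (le_abs_self g), map_neg Λ g ▸ hΛ.mono (neg_le_abs g)⟩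

lemma convex_setOf : Convex ℝ {Λ : StrongDual ℝ C(K, ℝ) | IsMean Λ} :=
  fun Λ hΛ Γ hΓ a b ha hb hab =>
    { nonneg := fun hg => add_nonneg (mul_nonneg ha (hΛ.nonneg hg)) (mul_nonneg hb (hΓ.nonneg hg))
      map_one := by
        change a * Λ 1 + b * Γ 1 = 1
        rw [hΛ.map_one, hΓ.map_one, mul_one, mul_one, hab] }

variable [CompactSpace K]

lemma abs_apply_le_norm (hΛ : IsMean Λ) (g : C(K, ℝ)) : |Λ g| ≤ ‖g‖ :=
  calc |Λ g| ≤ Λ |g| := hΛ.abs_apply_le g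
    _ ≤ Λ (‖g‖ • 1) := hΛ.mono fun x => by simpa using g.norm_coe_le_norm x
    _ = ‖g‖ := by rw [map_smul, hΛ.map_one, smul_eq_mul, mul_one]

lemma isCompact_setOf : IsCompact {Λ : WeakDual ℝ C(K, ℝ) | IsMean (WeakDual.toStrongDual Λ)} := by
  refine (WeakDual.isCompact_closedBall (𝕜 := ℝ) (0 : StrongDual ℝ C(K, ℝ)) 1).of_isClosed_subset
    ?_ fun Λ hΛ => ?_
  · have heq : {Λ : WeakDual ℝ C(K, ℝ) | IsMean (WeakDual.toStrongDual Λ)} =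
        (⋂ g ∈ Ici (0 : C(K, ℝ)), {Λ | 0 ≤ Λ g}) ∩ {Λ | Λ 1 = 1} := by
      ext Λ
      simp only [mem_inter_iff, mem_iInter]
      exact ⟨fun h => ⟨fun _ => h.nonneg, h.map_one⟩, fun h => ⟨h.1 _, h.2⟩⟩
    rw [heq]
    exact IsClosed.inter
      (isClosed_biInter fun g _ => isClosed_le continuous_const (WeakDual.eval_continuous g))
      (isClosed_eq (WeakDual.eval_continuous _) continuous_const)
  · rw [mem_preimage, mem_closedBall_zero_iff]
    exact ContinuousLinearMap.opNorm_le_bound _ zero_le_one fun g => by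
      simpa using hΛ.abs_apply_le_norm g

end IsMean

section Pullback

variable {M K : Type*} [TopologicalSpace K] [Monoid M] [MulAction M K] [ContinuousConstSMul M K]

/-- The operator `g ↦ (x ↦ g (m • x))` on continuous functions; it reverses products in `M`. -/
def pullback (m : M) : C(K, ℝ) →L[ℝ] C(K, ℝ) where
  toLinearMap :=
    (ContinuousMap.compRightAlgHom ℝ ℝ ⟨fun x : K => m • x, continuous_const_smul m⟩).toLinearMap
  cont := ContinuousMap.compRightAlgHom_continuous ℝ ℝ _

@[simp]
lemma pullback_apply (m : M) (g : C(K, ℝ)) (x : K) : pullback m g x = g (m • x) := rfl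

lemma pullback_mul (m n : M) (g : C(K, ℝ)) :
    pullback (m * n) g = pullback n (pullback m g) := by
  ext x
  simp [mul_smul]

lemma pullback_one (g : C(K, ℝ)) : pullback (1 : M) g = g := by
  ext x
  simp

lemma IsMean.comp_pullback {Λ : StrongDual ℝ C(K, ℝ)} (hΛ : IsMean Λ) (m : M) :
    IsMean (Λ.comp (pullback m)) where
  nonneg hg := hΛ.nonneg fun x => hg (m • x)
  map_one := hΛ.map_one

lemma norm_pullback_le [CompactSpace K] (m : M) (g : C(K, ℝ)) : ‖pullback m g‖ ≤ ‖g‖ :=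
  (ContinuousMap.norm_le _ (norm_nonneg g)).2 fun x => g.norm_coe_le_norm (m • x)

end Pullback

section EquicontinuousPullback

variable {M K : Type*} [UniformSpace K] [CompactSpace K] [Monoid M] [MulAction M K]
  [ContinuousConstSMul M K]

lemma equicontinuous_pullback (hE : UniformEquicontinuous fun (m : M) (x : K) => m • x)
    (g : C(K, ℝ)) : Equicontinuous fun m : M => ⇑(pullback m g : C(K, ℝ)) :=
  have hg : UniformContinuous g := CompactSpace.uniformContinuous_of_continuous g.continuous
  UniformEquicontinuous.equicontinuous fun _ hU => hE _ (hg hU)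

lemma totallyBounded_range_pullback (hE : UniformEquicontinuous fun (m : M) (x : K) => m • x)
    (g : C(K, ℝ)) : TotallyBounded (range fun m : M => pullback m g) := by
  let e := ContinuousMap.isometryEquivBoundedOfCompact K ℝ
  have hcompact : IsCompact (closure (range fun m : M => e (pullback m g))) := by
    refine BoundedContinuousFunction.arzela_ascoli (Metric.closedBall (0 : ℝ) ‖g‖)
      (isCompact_closedBall _ _) _ ?_ fun x U hU => ?_
    · rintro _ x ⟨m, rfl⟩
      exact mem_closedBall_zero_iff.2 (g.norm_coe_le_norm (m • x))
    · filter_upwards [equicontinuous_pullback hE g x U hU] with y hy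
      rintro ⟨_, m, rfl⟩
      exact hy m
  refine (totallyBounded_preimage e.isometry.isUniformInducing hcompact.totallyBounded).subset ?_
  rintro _ ⟨m, rfl⟩
  exact subset_closure ⟨m, rfl⟩

lemma continuous_pullback {S : Type*} [TopologicalSpace S] {f : S → M}
    (hE : UniformEquicontinuous fun (m : M) (x : K) => m • x)
    (hf : ∀ x : K, Continuous fun s => f s • x) (g : C(K, ℝ)) :
    Continuous fun s => pullback (f s) g := by
  refine continuous_iff_continuousAt.2 fun s => ?_
  rw [ContinuousAt, ContinuousMap.tendsto_iff_tendstoUniformly]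
  have hpointwise : Tendsto (fun t => ⇑(pullback (f t) g)) (𝓝 s) (𝓝 ⇑(pullback (f s) g)) :=
    tendsto_pi_nhds.2 fun x => (g.continuous.comp (hf x)).tendsto s
  exact UniformFun.tendsto_iff_tendstoUniformly.1
    ((((equicontinuous_pullback hE g).comp f).tendsto_uniformFun_iff_pi _ _).2 hpointwise)

end EquicontinuousPullback

/-- The dual of `C(K, ℝ)` with the topology of uniform convergence on the orbits
`{pullback m g | m : M}`, which makes the translations by `M` nonexpansive. It is a type synonym of
`StrongDual ℝ C(K, ℝ)`. -/
def OrbitDual (_M K : Type*) [TopologicalSpace K] : Type _ :=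
  StrongDual ℝ C(K, ℝ)

namespace OrbitDual

section Module

variable (M K : Type*) [TopologicalSpace K]

instance : AddCommGroup (OrbitDual M K) := inferInstanceAs (AddCommGroup (StrongDual ℝ C(K, ℝ)))

instance : Module ℝ (OrbitDual M K) := inferInstanceAs (Module ℝ (StrongDual ℝ C(K, ℝ)))

/-- The identity map from `OrbitDual M K` to the dual of `C(K, ℝ)`. -/
def toStrongDual : OrbitDual M K ≃ₗ[ℝ] StrongDual ℝ C(K, ℝ) := LinearEquiv.refl ℝ _

/-- The means, seen in `OrbitDual M K`. -/
def means : Set (OrbitDual M K) := {Λ | IsMean (toStrongDual M K Λ)}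

lemma convex_means : Convex ℝ (means M K) :=
  IsMean.convex_setOf (K := K)

lemma nonempty_means [Nonempty K] : (means M K).Nonempty := by
  obtain ⟨x⟩ := ‹Nonempty K›
  exact ⟨(toStrongDual M K).symm (ContinuousMap.evalCLM ℝ x), IsMean.evalCLM x⟩

end Module

variable {M K : Type*} [TopologicalSpace K] [Monoid M] [MulAction M K] [ContinuousConstSMul M K]

/-- The action of `M` on functionals dual to `pullback`; on measures it is the pushforward. -/
def pushforward (m : M) (Λ : OrbitDual M K) : OrbitDual M K :=
  (toStrongDual M K).symm ((toStrongDual M K Λ).comp (pullback m))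

@[simp]
lemma toStrongDual_pushforward (m : M) (Λ : OrbitDual M K) :
    toStrongDual M K (pushforward m Λ) = (toStrongDual M K Λ).comp (pullback m) := rfl

lemma pushforward_mul (m n : M) (Λ : OrbitDual M K) :
    pushforward (m * n) Λ = pushforward m (pushforward n Λ) := by
  refine (toStrongDual M K).injective (ContinuousLinearMap.ext fun g => ?_)
  simp [pullback_mul]

lemma mapsTo_pushforward_means (m : M) : MapsTo (pushforward m) (means M K) (means M K) :=
  fun _ hΛ => IsMean.comp_pullback hΛ m

variable [CompactSpace K]

lemma bddAbove_range_abs_pullback (g : C(K, ℝ)) (Λ : OrbitDual M K) :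
    BddAbove (range fun m : M => |toStrongDual M K Λ (pullback m g)|) := by
  refine ⟨‖toStrongDual M K Λ‖ * ‖g‖, ?_⟩
  rintro _ ⟨m, rfl⟩
  exact ((toStrongDual M K Λ).le_opNorm _).trans
    (mul_le_mul_of_nonneg_left (norm_pullback_le m g) (norm_nonneg _))

variable (M K) in
/-- The seminorms `Λ ↦ ⨆ m, |Λ (pullback m g)|` that define the topology of `OrbitDual M K`. -/
def orbitSeminorm : SeminormFamily ℝ (OrbitDual M K) C(K, ℝ) := fun g =>
  Seminorm.of (fun Λ => ⨆ m : M, |toStrongDual M K Λ (pullback m g)|)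
    (fun Λ Γ => ciSup_le fun m => by
      rw [map_add]
      exact (abs_add_le _ _).trans (add_le_add (le_ciSup (bddAbove_range_abs_pullback g Λ) m)
        (le_ciSup (bddAbove_range_abs_pullback g Γ) m)))
    (fun c Λ => by
      rw [Real.norm_eq_abs, Real.mul_iSup_of_nonneg (abs_nonneg c)]
      simp only [map_smul, _root_.smul_apply, smul_eq_mul, abs_mul])

lemma abs_pullback_le_orbitSeminorm (g : C(K, ℝ)) (Λ : OrbitDual M K) (m : M) :
    |toStrongDual M K Λ (pullback m g)| ≤ orbitSeminorm M K g Λ :=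
  le_ciSup (bddAbove_range_abs_pullback g Λ) m

lemma orbitSeminorm_le {g : C(K, ℝ)} {Λ : OrbitDual M K} {c : ℝ}
    (h : ∀ m : M, |toStrongDual M K Λ (pullback m g)| ≤ c) : orbitSeminorm M K g Λ ≤ c :=
  ciSup_le h

instance : TopologicalSpace (OrbitDual M K) := (orbitSeminorm M K).moduleFilterBasis.topology

variable (M K) in
lemma withSeminorms_orbitSeminorm : WithSeminorms (orbitSeminorm M K) := ⟨rfl⟩

instance : T2Space (OrbitDual M K) := by
  have := (withSeminorms_orbitSeminorm M K).topologicalAddGroup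
  have : T1Space (OrbitDual M K) := by
    refine (withSeminorms_orbitSeminorm M K).T1_of_separating fun Λ hΛ => ?_
    contrapose! hΛ
    refine (toStrongDual M K).map_eq_zero_iff.1 (ContinuousLinearMap.ext fun g => ?_)
    have hle := abs_pullback_le_orbitSeminorm g Λ (1 : M)
    rwa [hΛ g, pullback_one, abs_nonpos_iff] at hle
  infer_instance

lemma orbitSeminorm_pushforward_sub_le (g : C(K, ℝ)) (m : M) (Λ Γ : OrbitDual M K) :
    orbitSeminorm M K g (pushforward m Λ - pushforward m Γ) ≤ orbitSeminorm M K g (Λ - Γ) :=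
  orbitSeminorm_le fun l => by
    simpa [pullback_mul] using abs_pullback_le_orbitSeminorm g (Λ - Γ) (l * m)

lemma continuous_pushforward (m : M) :
    Continuous (pushforward m : OrbitDual M K → OrbitDual M K) := by
  refine continuous_iff_continuousAt.2 fun Λ => ?_
  refine ((withSeminorms_orbitSeminorm M K).tendsto_nhds _ _).2 fun g ε hε => ?_
  filter_upwards [((withSeminorms_orbitSeminorm M K).tendsto_nhds id Λ).1 tendsto_id g ε hε]
    with Γ hΓ
  exact (orbitSeminorm_pushforward_sub_le g m Γ Λ).trans_lt hΓ

end OrbitDual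

namespace OrbitDual

variable {M K : Type*} [UniformSpace K] [CompactSpace K] [Monoid M] [MulAction M K]
  [ContinuousConstSMul M K]

lemma tendsto_of_forall_tendsto_apply (hE : UniformEquicontinuous fun (m : M) (x : K) => m • x)
    {α : Type*} {l : Filter α} {Γ : α → OrbitDual M K} {Λ : OrbitDual M K}
    (hΓ : ∀ᶠ i in l, Γ i ∈ means M K) (hΛ : Λ ∈ means M K)
    (h : ∀ g, Tendsto (fun i => toStrongDual M K (Γ i) g) l (𝓝 (toStrongDual M K Λ g))) :
    Tendsto Γ l (𝓝 Λ) := by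
  refine ((withSeminorms_orbitSeminorm M K).tendsto_nhds _ _).2 fun g ε hε => ?_
  obtain ⟨A, hAfin, hA⟩ := Metric.totallyBounded_iff.1 (totallyBounded_range_pullback hE g) (ε / 4)
    (by positivity)
  have hclose : ∀ᶠ i in l, ∀ f ∈ A,
      |toStrongDual M K (Γ i) f - toStrongDual M K Λ f| < ε / 4 :=
    (eventually_all_finite hAfin).2 fun f _ =>
      (Metric.tendsto_nhds.1 (h f) (ε / 4) (by positivity))
  filter_upwards [hclose, hΓ] with i hi hΓi
  refine (orbitSeminorm_le (c := 3 * (ε / 4)) fun m => ?_).trans_lt (by linarith)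
  obtain ⟨f, hf, hmf⟩ := mem_iUnion₂.1 (hA (mem_range_self m))
  rw [Metric.mem_ball, dist_eq_norm] at hmf
  have hΓf := (IsMean.abs_apply_le_norm hΓi (pullback m g - f)).trans hmf.le
  have hΛf := (IsMean.abs_apply_le_norm hΛ (pullback m g - f)).trans hmf.le
  have hif := hi f hf
  rw [map_sub] at hΓf hΛf
  rw [map_sub, _root_.sub_apply]
  rw [abs_le] at hΓf hΛf ⊢
  rw [abs_lt] at hif
  constructor <;> linarith

lemma isCompact_means (hE : UniformEquicontinuous fun (m : M) (x : K) => m • x) :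
    IsCompact (means M K) := by
  let e (Λ : WeakDual ℝ C(K, ℝ)) : OrbitDual M K :=
    (toStrongDual M K).symm (WeakDual.toStrongDual Λ)
  have he : e '' {Λ | IsMean (WeakDual.toStrongDual Λ)} = means M K := image_id (means M K)
  rw [← he]
  refine IsMean.isCompact_setOf.image_of_continuousOn fun Λ hΛ => ?_
  exact tendsto_of_forall_tendsto_apply hE eventually_mem_nhdsWithin hΛ fun g =>
    ((WeakDual.eval_continuous g).tendsto Λ).mono_left nhdsWithin_le_nhds

lemma continuous_pushforward_apply {S : Type*} [TopologicalSpace S] {f : S → M}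
    (hE : UniformEquicontinuous fun (m : M) (x : K) => m • x)
    (hf : ∀ x : K, Continuous fun s => f s • x) {Λ : OrbitDual M K} (hΛ : Λ ∈ means M K) :
    Continuous fun s => pushforward (f s) Λ :=
  continuous_iff_continuousAt.2 fun s => tendsto_of_forall_tendsto_apply hE
    (Eventually.of_forall fun t => mapsTo_pushforward_means (f t) hΛ)
    (mapsTo_pushforward_means (f s) hΛ)
    fun g => ((toStrongDual M K Λ).continuous.comp (continuous_pullback hE hf g)).tendsto s

end OrbitDual

theorem PropertyD.exists_invariant_mean {S : Type u} [Semigroup S] [TopologicalSpace S]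
    (hD : PropertyD.{u, v} S) {K : Type v} [UniformSpace K] [CompactSpace K] [Nonempty K]
    [MulAction (WithOne S) K] [ContinuousConstSMul (WithOne S) K]
    (hE : UniformEquicontinuous fun (m : WithOne S) (x : K) => m • x)
    (hc : ∀ x : K, Continuous fun s : S => (s : WithOne S) • x) :
    ∃ Λ : StrongDual ℝ C(K, ℝ), IsMean Λ ∧
      ∀ (m : WithOne S) (g : C(K, ℝ)), Λ (pullback m g) = Λ g := by
  open OrbitDual in
  obtain ⟨Λ, hΛ, hfix⟩ := hD (OrbitDual (WithOne S) K) C(K, ℝ) _ (withSeminorms_orbitSeminorm _ K)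
    (means _ K) (fun s => pushforward (s : WithOne S)) (nonempty_means _ K) (convex_means _ K)
    (isCompact_means hE) (fun s => mapsTo_pushforward_means _)
    (fun s t Λ _ => by rw [WithOne.coe_mul, pushforward_mul])
    (fun Λ hΛ => continuous_pushforward_apply hE hc hΛ)
    (fun s => (continuous_pushforward _).continuousOn)
    (fun g s Λ _ Γ _ => orbitSeminorm_pushforward_sub_le g _ Λ Γ)
  refine ⟨toStrongDual _ K Λ, hΛ, fun m g => ?_⟩
  induction m using WithOne.recOneCoe with
  | one => rw [pullback_one]
  | coe s => exact congrArg (fun Γ => toStrongDual _ K Γ g) (hfix s)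

namespace IsMean

variable {K : Type*} [TopologicalSpace K] [CompactSpace K] {Λ : StrongDual ℝ C(K, ℝ)}

/-- The ideal of functions that vanish almost everywhere for a mean. Its common zero set is the
support of the mean. -/
def nullIdeal (hΛ : IsMean Λ) : Ideal C(K, ℝ) where
  carrier := {g | Λ |g| = 0}
  zero_mem' := by simp
  add_mem' {g h} hg hh := by
    refine le_antisymm ((hΛ.mono (abs_add_le g h)).trans ?_) (hΛ.nonneg (abs_nonneg _))
    rw [map_add, hg, hh, add_zero]
  smul_mem' f g hg := by
    refine le_antisymm ((hΛ.mono (h := ‖f‖ • |g|) fun x => ?_).trans ?_) (hΛ.nonneg (abs_nonneg _))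
    · simpa [abs_mul] using mul_le_mul_of_nonneg_right (f.norm_coe_le_norm x) (abs_nonneg (g x))
    · rw [map_smul, hg, smul_zero]

lemma mem_nullIdeal (hΛ : IsMean Λ) {g : C(K, ℝ)} : g ∈ hΛ.nullIdeal ↔ Λ |g| = 0 := Iff.rfl

lemma isClosed_nullIdeal (hΛ : IsMean Λ) : IsClosed (hΛ.nullIdeal : Set C(K, ℝ)) :=
  isClosed_eq (Λ.continuous.comp (ContinuousMap.continuous_postcomp ⟨abs, continuous_abs⟩))
    continuous_const

/-- The support of a mean, encoded as the set of points where every function of `nullIdeal`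
vanishes; on measures it is the topological support. -/
def support (hΛ : IsMean Λ) : Set K := (ContinuousMap.setOfIdeal hΛ.nullIdeal)ᶜ

lemma isClosed_support (hΛ : IsMean Λ) : IsClosed hΛ.support :=
  (ContinuousMap.setOfIdeal_open _).isClosed_compl

lemma mem_nullIdeal_iff_forall_mem_support [T2Space K] (hΛ : IsMean Λ) {g : C(K, ℝ)} :
    g ∈ hΛ.nullIdeal ↔ ∀ x ∈ hΛ.support, g x = 0 := by
  have hideal := ContinuousMap.idealOfSet_ofIdeal_isClosed (𝕜 := ℝ) hΛ.isClosed_nullIdeal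
  exact (SetLike.ext_iff.1 hideal g).symm.trans ContinuousMap.mem_idealOfSet

lemma nonempty_support [T2Space K] (hΛ : IsMean Λ) : hΛ.support.Nonempty := by
  by_contra! hempty
  have hone : (1 : C(K, ℝ)) ∈ hΛ.nullIdeal := by
    simp [hΛ.mem_nullIdeal_iff_forall_mem_support, hempty]
  rw [hΛ.mem_nullIdeal, abs_of_nonneg zero_le_one, hΛ.map_one] at hone
  exact one_ne_zero hone

lemma smul_image_support [T2Space K] {M : Type*} [Monoid M] [MulAction M K]
    [ContinuousConstSMul M K] (hΛ : IsMean Λ) {m : M}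
    (hm : ∀ g : C(K, ℝ), Λ (pullback m g) = Λ g) : (fun x => m • x) '' hΛ.support = hΛ.support := by
  have hpullback (g : C(K, ℝ)) : pullback m g ∈ hΛ.nullIdeal ↔ g ∈ hΛ.nullIdeal := by
    rw [hΛ.mem_nullIdeal, hΛ.mem_nullIdeal, ← hm |g|]
    rfl
  refine Subset.antisymm ?_ fun x hx => ?_
  · rintro _ ⟨x, hx, rfl⟩
    refine ContinuousMap.notMem_setOfIdeal.2 fun {g} hg => ?_
    exact hΛ.mem_nullIdeal_iff_forall_mem_support.1 ((hpullback g).2 hg) x hx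
  · by_contra hxn
    have hclosed : IsClosed ((fun x => m • x) '' hΛ.support) :=
      (hΛ.isClosed_support.isCompact.image (continuous_const_smul m)).isClosed
    obtain ⟨f, hf0, hf1, -⟩ := exists_continuous_zero_one_of_isClosed hclosed
      (isClosed_singleton (x := x)) (disjoint_singleton_right.2 hxn)
    have hf : f ∈ hΛ.nullIdeal := (hpullback f).1
      (hΛ.mem_nullIdeal_iff_forall_mem_support.2 fun y hy => hf0 (mem_image_of_mem _ hy))
    have := hΛ.mem_nullIdeal_iff_forall_mem_support.1 hf x hx
    exact one_ne_zero ((hf1 rfl).symm.trans this)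

end IsMean

theorem PropertyD.exists_isEquicontinuousSurjective {S : Type u} [Semigroup S] [TopologicalSpace S]
    (hD : PropertyD.{u, v} S) {K : Type v} [UniformSpace K] [CompactSpace K] [T2Space K]
    [Nonempty K] [MulAction (WithOne S) K]
    (hE : UniformEquicontinuous fun (m : WithOne S) (x : K) => m • x)
    (hc : ∀ x : K, Continuous fun s : S => (s : WithOne S) • x) :
    ∃ F : SubMulAction (WithOne S) K, IsClosed (F : Set K) ∧ (F : Set K).Nonempty ∧
      IsEquicontinuousSurjective (WithOne S) F := by
  have : ContinuousConstSMul (WithOne S) K := ⟨hE.equicontinuous.continuous⟩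
  obtain ⟨Λ, hΛ, hinv⟩ := hD.exists_invariant_mean hE hc
  have himage (m : WithOne S) := hΛ.smul_image_support (hinv m)
  refine ⟨⟨hΛ.support, fun m x hx => himage m ▸ mem_image_of_mem _ hx⟩, hΛ.isClosed_support,
    hΛ.nonempty_support, ?_, ?_⟩
  · rintro U ⟨T, hT, hTU⟩
    filter_upwards [preimage_mem_comap (hE T hT)] with y hy m
    exact hTU (hy m)
  · rintro m ⟨y, hy⟩
    obtain ⟨x, hx, rfl⟩ := (himage m).superset hy
    exact ⟨⟨x, hx⟩, rfl⟩

/-- `π` restricts to an action of the semigroup `S` on `K` whose orbit maps are continuous and whose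
translations are equicontinuous at every point of `K`, relative to `K`. -/
structure IsEquicontinuousAction {S W : Type*} [Semigroup S] [TopologicalSpace S] [AddGroup W]
    [TopologicalSpace W] (π : S → W → W) (K : Set W) : Prop where
  mapsTo (s : S) : MapsTo (π s) K K
  map_mul (s t : S) : ∀ x ∈ K, π (s * t) x = π s (π t x)
  continuous_orbit : ∀ x ∈ K, Continuous fun s => π s x
  equicontinuous : ∀ x ∈ K, ∀ V ∈ 𝓝 (0 : W), ∃ U ∈ 𝓝 x, ∀ s, ∀ y ∈ U ∩ K, π s y - π s x ∈ V

namespace IsEquicontinuousAction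

section

variable {S W : Type*} [Semigroup S] [TopologicalSpace S] [AddGroup W] [TopologicalSpace W]
  {π : S → W → W} {K : Set W}

lemma mono (h : IsEquicontinuousAction π K) {A : Set W} (hAK : A ⊆ K)
    (hA : ∀ s, MapsTo (π s) A A) : IsEquicontinuousAction π A where
  mapsTo := hA
  map_mul s t x hx := h.map_mul s t x (hAK hx)
  continuous_orbit x hx := h.continuous_orbit x (hAK hx)
  equicontinuous x hx V hV := by
    obtain ⟨U, hU, hUV⟩ := h.equicontinuous x (hAK hx) V hV
    exact ⟨U, hU, fun s y hy => hUV s y ⟨hy.1, hAK hy.2⟩⟩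

/-- The action on the subtype `K`, extended to the monoid obtained from `S` by adjoining a unit. -/
abbrev mulAction (h : IsEquicontinuousAction π K) : MulAction (WithOne S) K :=
  MulAction.compHom K (WithOne.lift
    ({ toFun := fun s => (h.mapsTo s).restrict (π s) K K
       map_mul' := fun s t => funext fun x => Subtype.ext (h.map_mul s t x x.2) } :
      S →ₙ* Function.End K))

end

variable {S : Type*} [Semigroup S] [TopologicalSpace S]

lemma uniformEquicontinuous_smul {W : Type*} [AddGroup W] [UniformSpace W] [IsUniformAddGroup W]
    {π : S → W → W} {K : Set W} [CompactSpace K] (h : IsEquicontinuousAction π K) :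
    letI := h.mulAction
    UniformEquicontinuous fun (m : WithOne S) (x : K) => m • x := by
  let := h.mulAction
  refine CompactSpace.uniformEquicontinuous_of_equicontinuous fun x T hT => ?_
  have hxT := mem_nhds_left x hT
  obtain ⟨R, hR, hRT⟩ := hT
  rw [uniformity_eq_comap_nhds_zero W] at hR
  obtain ⟨V, hV, hVR⟩ := hR
  obtain ⟨U, hU, hUV⟩ := h.equicontinuous x x.2 V hV
  filter_upwards [continuous_subtype_val.continuousAt.preimage_mem_nhds hU,
    hxT] with y hyU hyT m
  induction m using WithOne.recOneCoe with
  | one => simpa only [one_smul] using hyT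
  | coe s => exact hRT (hVR (hUV s y ⟨hyU, y.2⟩))

end IsEquicontinuousAction

theorem PropertyD.exists_surjOn_totallyBounded {S : Type u} [Semigroup S] [TopologicalSpace S]
    (hD : PropertyD.{u, v} S) {W : Type v} [AddGroup W] [UniformSpace W] [IsUniformAddGroup W]
    [T2Space W] {π : S → W → W} {K : Set W} (hK : IsCompact K) (hne : K.Nonempty)
    (h : IsEquicontinuousAction π K) {X : Type*} [AddCommGroup X] [Module ℝ X] [TopologicalSpace X]
    [IsTopologicalAddGroup X] [ContinuousSMul ℝ X] [LocallyConvexSpace ℝ X] {j : W → X}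
    (hj : Continuous fun y => toWeakSpace ℝ X (j y)) :
    ∃ B ⊆ K, ∃ x ∈ B, (∀ s, π s x ∈ B) ∧ (∀ s, SurjOn (π s) B B) ∧
      ∀ p : Seminorm ℝ X, Continuous p →
        (∀ s, ∀ y ∈ K, ∀ z ∈ K, p (j (π s y) - j (π s z)) ≤ p (j y - j z)) →
        ∀ ε > 0, ∃ N : Finset W, ↑N ⊆ B ∧ ∀ b ∈ B, ∃ a ∈ N, p (j a - j b) ≤ ε := by
  have : CompactSpace K := isCompact_iff_compactSpace.1 hK
  have : Nonempty K := hne.to_subtype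
  let := h.mulAction
  obtain ⟨F, hFclosed, ⟨x, hx⟩, hF⟩ := hD.exists_isEquicontinuousSurjective
    h.uniformEquicontinuous_smul fun x => (h.continuous_orbit x x.2).subtype_mk _
  have : CompactSpace F := isCompact_iff_compactSpace.1 hFclosed.isCompact
  let val (y : F) : W := y.1
  have hval : Continuous val := continuous_subtype_val.comp continuous_subtype_val
  let O : Set F := closure (orbit (WithOne S) ⟨x, hx⟩)
  have horbit (m : WithOne S) : m • ⟨x, hx⟩ ∈ O := subset_closure ⟨m, rfl⟩
  refine ⟨val '' O, image_subset_iff.2 fun y _ => y.1.2, x, ⟨_, horbit 1, by simp [val]⟩,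
    fun s => ⟨_, horbit s, rfl⟩, fun s => ?_, fun p hp hnonexp ε hε => ?_⟩
  · rintro _ ⟨y, hy, rfl⟩
    obtain ⟨z, hz, rfl⟩ := hF.surjOn_closure_orbit s _ hy
    exact ⟨val z, mem_image_of_mem val hz, rfl⟩
  · have hnonexp' (m : WithOne S) (y z : F) :
        p (j (val (m • y)) - j (val (m • z))) ≤ p (j (val y) - j (val z)) := by
      induction m using WithOne.recOneCoe with
      | one => rw [one_smul, one_smul]
      | coe s => exact hnonexp s _ y.1.2 _ z.1.2
    obtain ⟨A, hA⟩ := hF.exists_finset_forall_mem_closure_orbit (j := j ∘ val) (hj.comp hval) hp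
      hnonexp' ⟨x, hx⟩ hε
    classical
    refine ⟨A.image fun m => val (m • ⟨x, hx⟩), ?_, ?_⟩
    · rw [Finset.coe_image, image_subset_iff]
      exact fun m _ => mem_image_of_mem val (horbit m)
    · rintro _ ⟨y, hy, rfl⟩
      obtain ⟨m, hm, hle⟩ := hA y hy
      exact ⟨_, Finset.mem_image_of_mem _ hm, map_sub_rev p _ _ ▸ hle⟩

lemma weakTop_eq_weakSpace (𝕜 X : Type*) [NontriviallyNormedField 𝕜] [AddCommGroup X] [Module 𝕜 X]
    [TopologicalSpace X] :
    weakTop 𝕜 X = (inferInstance : TopologicalSpace (WeakSpace 𝕜 X)) := by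
  change _ = TopologicalSpace.induced (fun (x : X) (f : X →L[𝕜] 𝕜) => f x) Pi.topologicalSpace
  simp only [Pi.topologicalSpace, induced_iInf, induced_compose]
  rfl

lemma le_weakTop (𝕜 X : Type*) [NontriviallyNormedField 𝕜] [AddCommGroup X] [Module 𝕜 X]
    [τ : TopologicalSpace X] : τ ≤ weakTop 𝕜 X :=
  le_iInf fun f => continuous_iff_le_induced.1 f.continuous

lemma t2Space_weakSpace (X : Type*) [AddCommGroup X] [Module ℝ X] [TopologicalSpace X] [T2Space X]
    [IsTopologicalAddGroup X] [ContinuousSMul ℝ X] [LocallyConvexSpace ℝ X] :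
    T2Space (WeakSpace ℝ X) := by
  refine (WeakBilin.isEmbedding (B := (topDualPairing ℝ X).flip) fun x y hxy => ?_).t2Space
  by_contra hne
  obtain ⟨f, hf⟩ := SeparatingDual.exists_separating_of_ne (R := ℝ) hne
  exact hf (congrArg (fun φ => φ f) hxy)

theorem PropertyD.exists_forall_eq_of_minimal {S : Type u} [Semigroup S] [TopologicalSpace S]
    (hD : PropertyD.{u, v} S) {X : Type v} [AddCommGroup X] [Module ℝ X] [TopologicalSpace X]
    [T2Space X] {ι : Type*} {Q : SeminormFamily ℝ X ι} (hQ : WithSeminorms Q)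
    {π : S → WeakSpace ℝ X → WeakSpace ℝ X} {A : Set (WeakSpace ℝ X)}
    (hA : Minimal (IsInvariantConvexCompact π) A) (hπ : IsEquicontinuousAction π A)
    (hnonexp : ∀ i s, ∀ x ∈ A, ∀ y ∈ A, Q i ((toWeakSpace ℝ X).symm (π s x - π s y)) ≤
      Q i ((toWeakSpace ℝ X).symm (x - y))) :
    ∃ x ∈ A, ∀ s, π s x = x := by
  have := hQ.topologicalAddGroup
  have := hQ.continuousSMul
  have := hQ.toLocallyConvexSpace
  have := t2Space_weakSpace X
  let : UniformSpace (WeakSpace ℝ X) := IsTopologicalAddGroup.rightUniformSpace _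
  have : IsUniformAddGroup (WeakSpace ℝ X) := isUniformAddGroup_of_addCommGroup
  let j := (toWeakSpace ℝ X).symm
  have hj : Continuous fun w => toWeakSpace ℝ X (j w) := continuous_id
  obtain ⟨B, hBA, x, hx, hπx, hB, hnet⟩ :=
    hD.exists_surjOn_totallyBounded hA.prop.isCompact hA.prop.nonempty hπ hj
  refine ⟨x, hBA hx, fun s => j.injective (sub_eq_zero.1 ?_)⟩
  by_contra hne
  obtain ⟨i, hi⟩ := hQ.separating_of_T1 _ hne
  have hi' := hQ.continuous_seminorm i
  exact hi (IsInvariantConvexCompact.seminorm_sub_eq_zero (p := (Q i).comp (j : _ →ₗ[ℝ] X)) hA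
    (fun b => isClosed_setOf_seminorm_sub_le hj hi' (j b)) (hnonexp i) hBA hB
    (hnet (Q i) hi' (hnonexp i)) (hπx s) hx)

theorem PropertyD.propertyE {S : Type u} [Semigroup S] [TopologicalSpace S]
    (hD : PropertyD.{u, v} S) : PropertyE.{u, v} S := by
  intro X _ _ _ _ ι _ Q hQ
  have := hQ.topologicalAddGroup
  have := hQ.continuousSMul
  have := hQ.toLocallyConvexSpace
  have := t2Space_weakSpace X
  rw [weakTop_eq_weakSpace]
  intro K π hne hconvex hcompact hmaps hmul horbit _ hnonexp hequi
  have hK : IsInvariantConvexCompact (W := WeakSpace ℝ X) π K := ⟨hne, hconvex, hcompact, hmaps⟩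
  have hπ : IsEquicontinuousAction (W := WeakSpace ℝ X) π K := ⟨hmaps, hmul, horbit, hequi⟩
  obtain ⟨A, hAK, hA⟩ := hK.exists_minimal
  obtain ⟨x, hx, hfix⟩ := hD.exists_forall_eq_of_minimal hQ hA (hπ.mono hAK hA.prop.mapsTo)
    fun i s x hx y hy => hnonexp i s x (hAK hx) y (hAK hy)
  exact ⟨x, hAK hx, hfix⟩

lemma nhdsWithin_eq_comap_inf_principal {X Y : Type*} [TopologicalSpace X] [TopologicalSpace Y]
    [T2Space Y] {f : X → Y} {K : Set X} (hK : IsCompact K) (hf : ContinuousOn f K)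
    (hinj : InjOn f K) {x : X} (hx : x ∈ K) : 𝓝[K] x = comap f (𝓝 (f x)) ⊓ 𝓟 K := by
  have : CompactSpace K := isCompact_iff_compactSpace.1 hK
  have hemb := hf.domRestrict.isClosedEmbedding hinj.injective
  rw [nhdsWithin_eq_map_subtype_coe hx, hemb.nhds_eq_comap, domRestrict_eq, ← comap_comap,
    map_comap, Subtype.range_coe]
  rfl

lemma nhdsWithin_eq_of_le {X : Type*} {t₁ t₂ : TopologicalSpace X} (hT2 : @T2Space X t₂)
    (hle : t₁ ≤ t₂) {K : Set X} (hK : @IsCompact X t₁ K) {x : X} (hx : x ∈ K) :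
    @nhdsWithin X t₁ x K = @nhdsWithin X t₂ x K := by
  rw [@nhdsWithin_eq_comap_inf_principal X X t₁ t₂ hT2 id K hK
    (@Continuous.continuousOn X X t₁ t₂ id K (continuous_id_of_le hle)) (injOn_id K) x hx, comap_id]
  rfl

lemma eventually_forall_sub_mem_of_nonexpansive {S X ι : Type*} [AddCommGroup X] [Module ℝ X]
    [TopologicalSpace X] {Q : SeminormFamily ℝ X ι} (hQ : WithSeminorms Q)
    {π : S → X → X} {K : Set X}
    (hnonexp : ∀ i s, ∀ x ∈ K, ∀ y ∈ K, Q i (π s x - π s y) ≤ Q i (x - y)) {x : X} (hx : x ∈ K)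
    {V : Set X} (hV : V ∈ 𝓝 0) : ∀ᶠ y in 𝓝[K] x, ∀ s, π s y - π s x ∈ V := by
  obtain ⟨I, r, hr, hIV⟩ := (hQ.mem_nhds_iff 0 V).1 hV
  have hball : (I.sup Q).ball x r ∈ 𝓝 x := (hQ.mem_nhds_iff x _).2 ⟨I, r, hr, Subset.rfl⟩
  filter_upwards [nhdsWithin_le_nhds hball, self_mem_nhdsWithin] with y hy hyK s
  refine hIV ?_
  rw [Seminorm.mem_ball, sub_zero]
  calc (I.sup Q) (π s y - π s x) ≤ (I.sup Q) (y - x) :=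
        Seminorm.finset_sup_apply_le (apply_nonneg _ _) fun i hi =>
          (hnonexp i s y hyK x hx).trans (Seminorm.le_finset_sup_apply hi)
    _ < r := hy

theorem PropertyE.propertyD {S : Type u} [Semigroup S] [TopologicalSpace S]
    (hE : PropertyE.{u, v} S) : PropertyD.{u, v} S := by
  intro X _ _ τ _ ι _ Q hQ K π hne hconvex hcompact hmaps hmul horbit hcont hnonexp
  have := hQ.topologicalAddGroup
  have := hQ.continuousSMul
  have := hQ.toLocallyConvexSpace
  have hle := le_weakTop ℝ X
  have hT2 : @T2Space X (weakTop ℝ X) := by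
    rw [weakTop_eq_weakSpace]
    exact t2Space_weakSpace X
  have hweak : @IsCompact X (weakTop ℝ X) K := by
    simpa using @IsCompact.image X X τ (weakTop ℝ X) K id hcompact (continuous_id_of_le hle)
  have hnhds {x : X} (hx : x ∈ K) := nhdsWithin_eq_of_le hT2 hle hcompact hx
  refine hE X ι Q hQ K π hne hconvex hweak hmaps hmul
    (fun x hx => continuous_le_rng hle (horbit x hx)) (fun s x hx => ?_) hnonexp fun x hx V hV => ?_
  · exact (map_mono (hnhds hx).ge).trans ((hcont s x hx).trans (nhds_mono hle))
  · have hnear := eventually_forall_sub_mem_of_nonexpansive hQ hnonexp hx (nhds_mono hle hV)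
    rw [hnhds hx] at hnear
    obtain ⟨U, hU, hUV⟩ :=
      (@mem_nhdsWithin_iff_exists_mem_nhds_inter X (weakTop ℝ X) _ _ _).1 hnear
    exact ⟨U, hU, fun s y hy => hUV hy s⟩

theorem propertyD_iff_propertyE_general {S : Type u} [Semigroup S] [TopologicalSpace S] :
    PropertyD.{u, v} S ↔ PropertyE.{u, v} S :=
  ⟨PropertyD.propertyE, PropertyE.propertyD⟩

/-- **Theorem**: `S` has property (D) if and only if `S` has property (E). -/
theorem propertyD_iff_propertyE
    {S : Type u} [Semigroup S] [TopologicalSpace S] [T2Space S]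
    (hS : IsSemitopologicalSemigroup S) :
    PropertyD.{u, v} S ↔ PropertyE.{u, v} S :=
  propertyD_iff_propertyE_general
end
end

section
/- Let K be a compact Hausdorff topological space and let S be a (discrete) semigroup of self-maps of K (no continuity of the maps is required) that is compact in the product topology of K^K. Suppose that every nonempty closed S-invariant subset of K contains a common fixed point of S, i.e., a point x with sx = x for all s ∈ S. Then there exists an element e ∈ S that is a retraction of K onto the fixed point set F(S) = {x ∈ K : sx = x for every s ∈ S}, i.e., e ∘ e = e, e(K) ⊆ F(S), and e(x) = x for every x ∈ F(S). -/
open Set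

noncomputable section

universe u

/-!
Call `e ∈ S` left minimal if every `s ∘ e` with `s ∈ S` can be brought back to `e` by some `t ∈ S`.
Composition on the right with a fixed map is continuous on `K^K`, so the left ideals `S ∘ g` are
compact, and an element of a minimal one is left minimal. Given `x`, the orbit of `e x` under `S` is
compact and invariant, so it contains a common fixed point `s (e x)`. The map `t` with
`t ∘ s ∘ e = e` fixes this point, which is therefore `e x` itself.
-/

section InvariantSets

variable {X : Type*} [TopologicalSpace X] {F : Set (X → X)} {A : Set X} {x : X}

/-- The nonempty compact sets invariant under a family `F` of self-maps. The minimal ones are the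
minimal sets of topological dynamics. For `F` the left translations of a semigroup of maps, the
invariant sets are its left ideals. -/
structure IsCompactInvariant (F : Set (X → X)) (A : Set X) : Prop where
  nonempty : A.Nonempty
  isCompact : IsCompact A
  mapsTo : ∀ f ∈ F, MapsTo f A A

theorem isCompactInvariant_orbit (hne : F.Nonempty) (hcomp : ∀ f ∈ F, ∀ g ∈ F, f ∘ g ∈ F)
    (hx : IsCompact (Function.eval x '' F)) : IsCompactInvariant F (Function.eval x '' F) where
  nonempty := hne.image _
  isCompact := hx
  mapsTo := by
    rintro f hf _ ⟨g, hg, rfl⟩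
    exact ⟨f ∘ g, hcomp f hf g hg, rfl⟩

theorem isCompactInvariant_sInter_of_directedOn [T2Space X] {c : Set (Set X)}
    (hc : ∀ A ∈ c, IsCompactInvariant F A) (hdir : DirectedOn (· ⊇ ·) c) (hne : c.Nonempty) :
    IsCompactInvariant F (⋂₀ c) where
  nonempty := by
    have : Nonempty c := hne.to_subtype
    exact IsCompact.nonempty_sInter_of_directed_nonempty_isCompact_isClosed
      hdir (fun A hA => (hc A hA).nonempty)
      (fun A hA => (hc A hA).isCompact) (fun A hA => (hc A hA).isCompact.isClosed)
  isCompact := by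
    obtain ⟨A, hA⟩ := hne
    exact (hc A hA).isCompact.of_isClosed_subset
      (isClosed_sInter fun B hB => (hc B hB).isCompact.isClosed) (sInter_subset_of_mem hA)
  mapsTo f hf _ hx A hA := (hc A hA).mapsTo f hf (hx A hA)

theorem IsCompactInvariant.exists_minimal_subset [T2Space X] (hA : IsCompactInvariant F A) :
    ∃ L ⊆ A, Minimal (IsCompactInvariant F) L :=
  zorn_superset_nonempty {B | IsCompactInvariant F B}
    (fun c hc hchain hne => ⟨⋂₀ c, isCompactInvariant_sInter_of_directedOn hc
      (IsChain.directedOn hchain.symm) hne, fun _ => sInter_subset_of_mem⟩) A hA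

theorem exists_apply_eq_of_minimal_isCompactInvariant (hA : Minimal (IsCompactInvariant F) A)
    (hne : F.Nonempty) (hcomp : ∀ f ∈ F, ∀ g ∈ F, f ∘ g ∈ F) {y : X} (hx : x ∈ A) (hy : y ∈ A)
    (horbit : IsCompact (Function.eval y '' F)) : ∃ f ∈ F, f y = x := by
  have horbit_subset : Function.eval y '' F ⊆ A := by
    rintro _ ⟨f, hf, rfl⟩
    exact hA.prop.mapsTo f hf hy
  exact hA.le_of_le (isCompactInvariant_orbit hne hcomp horbit) horbit_subset hx

end InvariantSets

section CompactSemigroup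

variable {K : Type*} [TopologicalSpace K] [T2Space K] {S : Set (K → K)}

theorem exists_mem_forall_exists_comp_comp_eq (hne : S.Nonempty)
    (hcomp : ∀ f ∈ S, ∀ g ∈ S, f ∘ g ∈ S) (hS : IsCompact S) :
    ∃ e ∈ S, ∀ s ∈ S, ∃ t ∈ S, t ∘ s ∘ e = e := by
  let leftTranslations : Set ((K → K) → (K → K)) := (fun f g => f ∘ g) '' S
  have hne_translations : leftTranslations.Nonempty := hne.image _
  have hcomp_translations : ∀ φ ∈ leftTranslations, ∀ ψ ∈ leftTranslations,
      φ ∘ ψ ∈ leftTranslations := by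
    rintro _ ⟨f, hf, rfl⟩ _ ⟨g, hg, rfl⟩
    exact ⟨f ∘ g, hcomp f hf g hg, rfl⟩
  have horbit (g : K → K) : IsCompact (Function.eval g '' leftTranslations) := by
    rw [image_image]
    exact hS.image (continuous_pi fun x => continuous_apply (g x))
  have hS_invariant : IsCompactInvariant leftTranslations S :=
    ⟨hne, hS, by rintro _ ⟨f, hf, rfl⟩ g hg; exact hcomp f hf g hg⟩
  obtain ⟨L, hLS, hL⟩ := hS_invariant.exists_minimal_subset
  obtain ⟨e, he⟩ := hL.prop.nonempty
  refine ⟨e, hLS he, fun s hs => ?_⟩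
  have hse : s ∘ e ∈ L := hL.prop.mapsTo _ (mem_image_of_mem _ hs) he
  obtain ⟨_, ⟨t, ht, rfl⟩, hte⟩ := exists_apply_eq_of_minimal_isCompactInvariant hL
    hne_translations hcomp_translations he hse (horbit _)
  exact ⟨t, ht, hte⟩

theorem exists_retraction_of_compact_semigroup_general (hne : S.Nonempty)
    (hcomp : ∀ f ∈ S, ∀ g ∈ S, f ∘ g ∈ S) (hS : IsCompact S)
    (hfix : ∀ A : Set K, IsCompactInvariant S A → ∃ x ∈ A, ∀ f ∈ S, f x = x) :
    ∃ e ∈ S, e ∘ e = e ∧ (∀ x : K, ∀ f ∈ S, f (e x) = e x) ∧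
      (∀ x : K, (∀ f ∈ S, f x = x) → e x = x) := by
  obtain ⟨e, he, hreturn⟩ := exists_mem_forall_exists_comp_comp_eq hne hcomp hS
  have hfixed (x : K) : ∀ f ∈ S, f (e x) = e x := by
    obtain ⟨_, ⟨s, hs, rfl⟩, hsx⟩ := hfix _ <|
      isCompactInvariant_orbit hne hcomp (hS.image (continuous_apply (e x)))
    obtain ⟨t, ht, htse⟩ := hreturn s hs
    have hsx_eq : s (e x) = e x :=
      calc s (e x) = t (s (e x)) := (hsx t ht).symm
        _ = e x := congrFun htse x
    simpa only [Function.eval, hsx_eq] using hsx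
  exact ⟨e, he, funext fun x => hfixed x e he, hfixed, fun x hx => hx e he⟩

end CompactSemigroup

/-- **Theorem (Bruck)**: Let `K` be a compact Hausdorff space and `S` a nonempty semigroup of
(not necessarily continuous) self-maps of `K` which is compact in the product topology of `K^K`.
If every nonempty closed `S`-invariant subset of `K` contains a common fixed point of `S`, then
`S` contains a retraction `e` of `K` onto the fixed point set
`F(S) = {x ∈ K : s x = x for all s ∈ S}`. -/
theorem exists_retraction_of_compact_semigroup
    {K : Type u} [TopologicalSpace K] [CompactSpace K] [T2Space K]
    (S : Set (K → K)) (hSne : S.Nonempty)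
    -- `S` is a semigroup of self-maps of `K`
    (hSmul : ∀ f ∈ S, ∀ g ∈ S, f ∘ g ∈ S)
    -- `S` is compact in the product topology of `K^K`
    (hScpt : IsCompact S)
    -- every nonempty closed `S`-invariant subset of `K` contains a common fixed point of `S`
    (hfix : ∀ A : Set K, A.Nonempty → IsClosed A → (∀ f ∈ S, MapsTo f A A) →
      ∃ x ∈ A, ∀ f ∈ S, f x = x) :
    ∃ e ∈ S, e ∘ e = e ∧ (∀ x : K, ∀ f ∈ S, f (e x) = e x) ∧
      (∀ x : K, (∀ f ∈ S, f x = x) → e x = x) := by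
  exact exists_retraction_of_compact_semigroup_general hSne hSmul hScpt fun A hA =>
    hfix A hA.nonempty hA.isCompact.isClosed hA.mapsTo
end
end
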